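/- arXiv:1312.1640 — 9 statements merged into one kernel-verified Lean document; each statement's English description precedes it below -/
import Mathlib

section
/- If A, B, C are three affinely independent (non-collinear) points in the Euclidean plane, then the point minimizing P ↦ dist(P,A) + dist(P,B) + dist(P,C) is unique: if F₁ and F₂ both minimize this function over the plane, then F₁ = F₂. -/
open EuclideanGeometry

lemma fermat_aux_line {X F₁ F₂ : EuclideanSpace ℝ (Fin 2)} (hne : F₁ ≠ F₂)
    (h : SameRay ℝ (F₁ - X) (F₂ - X)) : ∃ r : ℝ, X = r • (F₂ - F₁) +ᵥ F₁ := by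
  rcases h with h | h | ⟨r₁, r₂, h1, h2, h⟩
  · exact ⟨0, by simp [(sub_eq_zero.1 h)]⟩
  · exact ⟨1, by simp [(sub_eq_zero.1 h)]⟩
  · have hr : r₁ - r₂ ≠ 0 := by
      intro h0
      have h0' : r₁ = r₂ := sub_eq_zero.1 h0
      subst h0'
      exact hne (sub_left_injective (smul_right_injective _ h1.ne' h))
    refine ⟨-(r₂ / (r₁ - r₂)), ?_⟩
    ext i
    have hi := congrArg (fun v : EuclideanSpace ℝ (Fin 2) => v i) h
    simp at hi ⊢
    field_simp
    linarith

lemma fermat_aux_mid (X F₁ F₂ : EuclideanSpace ℝ (Fin 2)) :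
    2 * dist (midpoint ℝ F₁ F₂) X = ‖(F₁ - X) + (F₂ - X)‖ := by
  have : (F₁ - X) + (F₂ - X) = (2 : ℝ) • (midpoint ℝ F₁ F₂ - X) := by
    ext i
    simp [midpoint_eq_smul_add]
    ring
  rw [this, norm_smul, dist_eq_norm]
  simp

/-- Uniqueness of the Fermat–Torricelli point for three affinely independent points. -/
theorem fermat_point_unique
    (A B C : EuclideanSpace ℝ (Fin 2))
    (hABC : AffineIndependent ℝ ![A, B, C])
    (F₁ F₂ : EuclideanSpace ℝ (Fin 2))
    (hF₁ : ∀ P : EuclideanSpace ℝ (Fin 2),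
      dist F₁ A + dist F₁ B + dist F₁ C ≤ dist P A + dist P B + dist P C)
    (hF₂ : ∀ P : EuclideanSpace ℝ (Fin 2),
      dist F₂ A + dist F₂ B + dist F₂ C ≤ dist P A + dist P B + dist P C) :
    F₁ = F₂ := by
  by_contra hne
  rw [affineIndependent_iff_not_collinear_set] at hABC
  apply hABC
  have h1 := hF₁ (midpoint ℝ F₁ F₂)
  have h2 := hF₂ (midpoint ℝ F₁ F₂)
  have mA := fermat_aux_mid A F₁ F₂
  have mB := fermat_aux_mid B F₁ F₂
  have mC := fermat_aux_mid C F₁ F₂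
  have tA := norm_add_le (F₁ - A) (F₂ - A)
  have tB := norm_add_le (F₁ - B) (F₂ - B)
  have tC := norm_add_le (F₁ - C) (F₂ - C)
  simp only [dist_eq_norm] at h1 h2 mA mB mC
  rw [collinear_iff_exists_forall_eq_smul_vadd]
  refine ⟨F₁, F₂ - F₁, ?_⟩
  intro p hp
  apply fermat_aux_line hne
  rw [sameRay_iff_norm_add]
  rcases hp with rfl | rfl | rfl <;> linarith
end

section
/- Let A, B, C be three points in the Euclidean plane and let F be a point distinct from A, B and C such that the angles ∠AFB, ∠BFC and ∠CFA are all equal to 2π/3 (120°). Then F minimizes the sum of distances: for every point P, dist(F,A) + dist(F,B) + dist(F,C) ≤ dist(P,A) + dist(P,B) + dist(P,C). -/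
open EuclideanGeometry Real

/-- If `F` sees each pair among `A`, `B`, `C` under an angle of `120°`, then `F`
minimizes the sum of distances to `A`, `B`, `C`. -/
theorem fermat_point_of_angles
    (A B C F : EuclideanSpace ℝ (Fin 2))
    (hFA : F ≠ A) (hFB : F ≠ B) (hFC : F ≠ C)
    (h₁ : ∠ A F B = 2 * π / 3)
    (h₂ : ∠ B F C = 2 * π / 3)
    (h₃ : ∠ C F A = 2 * π / 3) :
    ∀ P : EuclideanSpace ℝ (Fin 2),
      dist F A + dist F B + dist F C ≤ dist P A + dist P B + dist P C := by
  intro P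
  have hcos : Real.cos (2 * π / 3) = -(1 / 2) := by
    have : 2 * π / 3 = π - π / 3 := by ring
    rw [this, Real.cos_pi_sub, Real.cos_pi_div_three]
  have key : ∀ X Y : EuclideanSpace ℝ (Fin 2), F ≠ X → F ≠ Y → ∠ X F Y = 2 * π / 3 →
      inner ℝ (‖X - F‖⁻¹ • (X - F)) (‖Y - F‖⁻¹ • (Y - F)) = -(1 / 2 : ℝ) := by
    intro X Y hX hY h
    have hx : ‖X - F‖ ≠ 0 := norm_ne_zero_iff.mpr (sub_ne_zero.mpr hX.symm)
    have hy : ‖Y - F‖ ≠ 0 := norm_ne_zero_iff.mpr (sub_ne_zero.mpr hY.symm)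
    have h' := InnerProductGeometry.cos_angle_mul_norm_mul_norm (X - F) (Y - F)
    have h2 : InnerProductGeometry.angle (X - F) (Y - F) = 2 * π / 3 := h
    rw [h2, hcos] at h'
    rw [real_inner_smul_left, real_inner_smul_right, ← h']
    field_simp
  have unit : ∀ X : EuclideanSpace ℝ (Fin 2), F ≠ X → ‖(‖X - F‖⁻¹ • (X - F))‖ = 1 := by
    intro X hX
    have hx : ‖X - F‖ ≠ 0 := norm_ne_zero_iff.mpr (sub_ne_zero.mpr hX.symm)
    rw [norm_smul, norm_inv, norm_norm, inv_mul_cancel₀ hx]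
  have bd : ∀ X : EuclideanSpace ℝ (Fin 2), F ≠ X →
      dist F X + inner ℝ (‖X - F‖⁻¹ • (X - F)) (F - P) ≤ dist P X := by
    intro X hX
    have hx : ‖X - F‖ ≠ 0 := norm_ne_zero_iff.mpr (sub_ne_zero.mpr hX.symm)
    have h1 := real_inner_le_norm (‖X - F‖⁻¹ • (X - F)) (X - P)
    rw [unit X hX, one_mul] at h1
    have h2 : X - P = (X - F) + (F - P) := by abel
    have h3 : inner ℝ (‖X - F‖⁻¹ • (X - F)) (X - F) = ‖X - F‖ := by
      rw [real_inner_smul_left, real_inner_self_eq_norm_sq]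
      field_simp
    rw [dist_comm F X, dist_comm P X, dist_eq_norm, dist_eq_norm]
    have h4 : inner ℝ (‖X - F‖⁻¹ • (X - F)) (X - P)
        = ‖X - F‖ + inner ℝ (‖X - F‖⁻¹ • (X - F)) (F - P) := by
      rw [h2, inner_add_right, h3]
    linarith
  have k1 := key A B hFA hFB h₁
  have k2 := key B C hFB hFC h₂
  have k3 := key C A hFC hFA h₃
  have bA := bd A hFA
  have bB := bd B hFB
  have bC := bd C hFC
  have uA := unit A hFA
  have uB := unit B hFB
  have uC := unit C hFC
  generalize ‖A - F‖⁻¹ • (A - F) = u at *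
  generalize ‖B - F‖⁻¹ • (B - F) = v at *
  generalize ‖C - F‖⁻¹ • (C - F) = w at *
  have hz : u + v + w = 0 := by
    rw [← norm_eq_zero, ← sq_eq_zero_iff, norm_add_sq_real, norm_add_sq_real, inner_add_left,
      k1, k2, real_inner_comm, k3, uA, uB, uC]
    norm_num
  have hs : inner ℝ u (F - P) + inner ℝ v (F - P) + inner ℝ w (F - P) = (0 : ℝ) := by
    rw [← inner_add_left, ← inner_add_left, hz, inner_zero_left]
  linarith
end

section
/- Let A, B, C be three pairwise distinct points in the Euclidean plane such that the angle ∠ACB at the vertex C is at least 2π/3 (120°). Then C itself minimizes the sum of distances: for every point P, dist(C,A) + dist(C,B) ≤ dist(P,A) + dist(P,B) + dist(P,C). -/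
open EuclideanGeometry Real

theorem fermat_aux {V : Type*} [NormedAddCommGroup V] [InnerProductSpace ℝ V]
    (a b p : V) (ha : a ≠ 0) (hb : b ≠ 0)
    (h : 2 * π / 3 ≤ InnerProductGeometry.angle a b) :
    ‖a‖ + ‖b‖ ≤ ‖p - a‖ + ‖p - b‖ + ‖p‖ := by
  have key : ∀ a : V, a ≠ 0 → ‖a‖ ≤ ‖p - a‖ + inner ℝ (‖a‖⁻¹ • a) p := by
    intro a ha
    have h0 : ‖a‖ ≠ 0 := norm_ne_zero_iff.mpr ha
    have h1 := real_inner_le_norm (‖a‖⁻¹ • a) (a - p)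
    rw [norm_smul, norm_inv, norm_norm, inv_mul_cancel₀ h0, one_mul, inner_sub_right,
      real_inner_smul_left, real_inner_self_eq_norm_sq, norm_sub_rev] at h1
    have h2 : ‖a‖⁻¹ * ‖a‖ ^ 2 = ‖a‖ := by field_simp
    linarith
  have h1 := key a ha
  have h2 := key b hb
  have hna : ‖a‖ ≠ 0 := norm_ne_zero_iff.mpr ha
  have hnb : ‖b‖ ≠ 0 := norm_ne_zero_iff.mpr hb
  have hc : Real.cos (InnerProductGeometry.angle a b) ≤ -(1 / 2) := by
    have h3 := Real.cos_le_cos_of_nonneg_of_le_pi (by positivity)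
      (InnerProductGeometry.angle_le_pi a b) h
    have h4 : Real.cos (2 * π / 3) = -(1 / 2) := by
      rw [show 2 * π / 3 = π - π / 3 by ring, Real.cos_pi_sub, Real.cos_pi_div_three]
    linarith
  have huv : ‖‖a‖⁻¹ • a + ‖b‖⁻¹ • b‖ ≤ 1 := by
    have h5 := norm_add_sq_real (‖a‖⁻¹ • a) (‖b‖⁻¹ • b)
    rw [norm_smul ‖a‖⁻¹ a, norm_smul ‖b‖⁻¹ b, norm_inv, norm_norm, norm_inv, norm_norm,
      inv_mul_cancel₀ hna, inv_mul_cancel₀ hnb,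
      real_inner_smul_left, real_inner_smul_right] at h5
    rw [InnerProductGeometry.cos_angle] at hc
    have h6 : ‖a‖⁻¹ * (‖b‖⁻¹ * inner ℝ a b) = inner ℝ a b / (‖a‖ * ‖b‖) := by
      field_simp
    rw [h6] at h5
    nlinarith [norm_nonneg (‖a‖⁻¹ • a + ‖b‖⁻¹ • b)]
  have h7 := real_inner_le_norm (‖a‖⁻¹ • a + ‖b‖⁻¹ • b) p
  rw [inner_add_left] at h7
  have h8 := mul_le_mul_of_nonneg_right huv (norm_nonneg p)
  linarith

/-- If the angle of the triangle `ABC` at the vertex `C` is at least `120°`, then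
`C` itself minimizes the sum of distances to `A`, `B`, `C`. -/
theorem fermat_point_eq_vertex_of_large_angle
    (A B C : EuclideanSpace ℝ (Fin 2))
    (hAB : A ≠ B) (hBC : B ≠ C) (hCA : C ≠ A)
    (hangle : 2 * π / 3 ≤ ∠ A C B) :
    ∀ P : EuclideanSpace ℝ (Fin 2),
      dist C A + dist C B ≤ dist P A + dist P B + dist P C := by
  intro P
  have h := fermat_aux (A - C) (B - C) (P - C) (sub_ne_zero.mpr hCA.symm)
    (sub_ne_zero.mpr hBC) hangle
  rw [sub_sub_sub_cancel_right, sub_sub_sub_cancel_right] at h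
  rw [dist_comm C A, dist_comm C B]
  simpa only [dist_eq_norm] using h
end

section
/- Let A, B, C be three affinely independent points in the Euclidean plane and let F be a point that minimizes P ↦ dist(P,A) + dist(P,B) + dist(P,C) and satisfies F ≠ A, F ≠ B, F ≠ C. Then the three angles at F satisfy ∠AFB = ∠BFC = ∠CFA = 2π/3 (Cavalieri's theorem). -/
open EuclideanGeometry Real

lemma fpa_deriv (w v : EuclideanSpace ℝ (Fin 2)) (hw : w ≠ 0) :
    HasDerivAt (fun t : ℝ => ‖w + t • v‖) (inner ℝ (‖w‖⁻¹ • w) v) 0 := by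
  have h1 : HasDerivAt (fun t : ℝ => w + t • v) v 0 := by
    simpa using ((hasDerivAt_id (0:ℝ)).smul_const v).const_add w
  have h2 := h1.norm_sq.sqrt (by simpa using hw)
  simp only [Real.sqrt_sq (norm_nonneg _)] at h2
  convert h2 using 1
  have : ‖w‖ ≠ 0 := by simpa using hw
  simp only [zero_smul, add_zero, real_inner_smul_left]
  field_simp

lemma fpa_inner (a b c : EuclideanSpace ℝ (Fin 2)) (ha : ‖a‖ = 1) (hb : ‖b‖ = 1) (hc : ‖c‖ = 1)
    (h : a + b + c = 0) : inner ℝ a b = -1 / 2 := by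
  have h1 : a + b = -c := eq_neg_of_add_eq_zero_left h
  have h2 := norm_add_sq_real a b
  rw [h1, norm_neg, ha, hb, hc] at h2
  linarith

lemma fpa_angle (A B F : EuclideanSpace ℝ (Fin 2))
    (h : inner ℝ (‖F - A‖⁻¹ • (F - A)) (‖F - B‖⁻¹ • (F - B)) = -1 / 2) :
    ∠ A F B = 2 * π / 3 := by
  have e : inner ℝ (A - F) (B - F) / (‖A - F‖ * ‖B - F‖) = -1 / 2 := by
    rw [← h, real_inner_smul_left, real_inner_smul_right, ← neg_sub F A, ← neg_sub F B,
      inner_neg_neg, norm_neg, norm_neg, div_eq_mul_inv, mul_inv]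
    ring
  have e2 : Real.cos (2 * π / 3) = -1 / 2 := by
    rw [show 2 * π / 3 = π - π / 3 by ring, Real.cos_pi_sub, Real.cos_pi_div_three]
    norm_num
  unfold EuclideanGeometry.angle InnerProductGeometry.angle
  simp only [vsub_eq_sub]
  rw [e, ← e2, Real.arccos_cos (by positivity) (by linarith [Real.pi_pos])]

/-- Cavalieri's theorem: if `F` minimizes the sum of distances to the vertices of a
nondegenerate triangle `ABC` and is distinct from each vertex, then the three angles
at `F` are all equal to `120°`. -/
theorem fermat_point_angles
    (A B C F : EuclideanSpace ℝ (Fin 2))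
    (hABC : AffineIndependent ℝ ![A, B, C])
    (hF : ∀ P : EuclideanSpace ℝ (Fin 2),
      dist F A + dist F B + dist F C ≤ dist P A + dist P B + dist P C)
    (hFA : F ≠ A) (hFB : F ≠ B) (hFC : F ≠ C) :
    ∠ A F B = 2 * π / 3 ∧ ∠ B F C = 2 * π / 3 ∧ ∠ C F A = 2 * π / 3 := by
  have nA := sub_ne_zero.2 hFA
  have nB := sub_ne_zero.2 hFB
  have nC := sub_ne_zero.2 hFC
  have key : ‖F - A‖⁻¹ • (F - A) + ‖F - B‖⁻¹ • (F - B) + ‖F - C‖⁻¹ • (F - C) = 0 := by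
    refine ext_inner_right ℝ fun v => ?_
    rw [inner_zero_left, inner_add_left, inner_add_left]
    have hd := ((fpa_deriv _ v nA).add (fpa_deriv _ v nB)).add (fpa_deriv _ v nC)
    refine IsLocalMin.hasDerivAt_eq_zero (Filter.Eventually.of_forall fun t => ?_) hd
    have := hF (F + t • v)
    simp only [dist_eq_norm] at this
    simpa [add_sub_right_comm] using this
  have u : ∀ w : EuclideanSpace ℝ (Fin 2), w ≠ 0 → ‖‖w‖⁻¹ • w‖ = 1 := fun w hw => by
    rw [norm_smul, norm_inv, norm_norm, inv_mul_cancel₀ (norm_ne_zero_iff.2 hw)]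
  refine ⟨fpa_angle _ _ _ (fpa_inner _ _ _ (u _ nA) (u _ nB) (u _ nC) key),
    fpa_angle _ _ _ (fpa_inner _ _ _ (u _ nB) (u _ nC) (u _ nA) ?_),
    fpa_angle _ _ _ (fpa_inner _ _ _ (u _ nC) (u _ nA) (u _ nB) ?_)⟩
  · rw [← key]; abel
  · rw [← key]; abel
end

section
/- Let A, B, C be three affinely independent points in the Euclidean plane with side lengths a = dist(B,C), b = dist(C,A), c = dist(A,B). For every point P in the interior of the triangle (i.e., P lies in the interior of the convex hull of {A, B, C}), the distances R_A = dist(P,A), R_B = dist(P,B), R_C = dist(P,C) satisfy the strict inequality R_A + R_B + R_C < max{a + b, b + c, c + a} (the Visschers–Sándor inequality). -/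
open EuclideanGeometry

/-- The Visschers–Sándor inequality: for any interior point `P` of the triangle `ABC`,
the sum of the distances from `P` to the vertices is strictly less than
`max {a + b, b + c, c + a}`, where `a`, `b`, `c` are the side lengths. -/
theorem visschers_sandor_inequality
    (A B C : EuclideanSpace ℝ (Fin 2))
    (hABC : AffineIndependent ℝ ![A, B, C])
    (P : EuclideanSpace ℝ (Fin 2))
    (hP : P ∈ interior (convexHull ℝ ({A, B, C} : Set (EuclideanSpace ℝ (Fin 2))))) :
    dist P A + dist P B + dist P C <
      max (dist B C + dist C A) (max (dist C A + dist A B) (dist A B + dist B C)) := by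
  have hspan : affineSpan ℝ (Set.range ![A, B, C]) = ⊤ := by
    rw [hABC.affineSpan_eq_top_iff_card_eq_finrank_add_one]
    simp
  let bs : AffineBasis (Fin 3) ℝ (EuclideanSpace ℝ (Fin 2)) := ⟨![A, B, C], hABC, hspan⟩
  have hr : Set.range bs = {A, B, C} := by
    change Set.range ![A, B, C] = _
    ext p
    simp [eq_comm]
    tauto
  rw [← hr, bs.interior_convexHull] at hP
  have h0 := hP 0
  have h1 := hP 1
  have h2 := hP 2
  have hs := bs.sum_coord_apply_eq_one P
  have hl := bs.linear_combination_coord_eq_self P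
  rw [Fin.sum_univ_three] at hs hl
  have e0 : bs 0 = A := rfl
  have e1 : bs 1 = B := rfl
  have e2 : bs 2 = C := rfl
  rw [e0, e1, e2] at hl
  generalize bs.coord 0 P = x at *
  generalize bs.coord 1 P = y at *
  generalize bs.coord 2 P = z at *
  have hx : x = 1 - y - z := by linarith
  have pA : dist P A < y * dist A B + z * dist C A := by
    have hd : P - A = y • (B - A) + z • (C - A) := by
      rw [← hl, hx]; module
    rw [dist_eq_norm P A, hd, dist_comm A B, dist_eq_norm B A, dist_eq_norm C A]
    have n1 : ‖y • (B - A)‖ = y * ‖B - A‖ := by rw [norm_smul, Real.norm_of_nonneg h1.le]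
    have n2 : ‖z • (C - A)‖ = z * ‖C - A‖ := by rw [norm_smul, Real.norm_of_nonneg h2.le]
    rw [← n1, ← n2]
    refine lt_of_le_of_ne (norm_add_le _ _) fun he => ?_
    have hray := sameRay_iff_norm_add.2 he
    obtain ⟨u, s, t, -, -, -, hu, hv⟩ := hray.exists_eq_smul
    rw [affineIndependent_iff_not_collinear_set] at hABC
    apply hABC
    rw [collinear_iff_of_mem (p₀ := A) (by simp)]
    have hB : B = (y⁻¹ * s) • u + A := by
      rw [mul_smul, ← hu, inv_smul_smul₀ h1.ne']; simp
    have hC : C = (z⁻¹ * t) • u + A := by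
      rw [mul_smul, ← hv, inv_smul_smul₀ h2.ne']; simp
    refine ⟨u, ?_⟩
    rintro p (rfl | rfl | rfl)
    · exact ⟨0, by simp⟩
    · exact ⟨_, hB⟩
    · exact ⟨_, hC⟩
  have pB : dist P B ≤ x * dist A B + z * dist B C := by
    have hd : P - B = x • (A - B) + z • (C - B) := by
      rw [← hl, hx]; module
    rw [dist_eq_norm P B, hd, dist_comm B C, dist_eq_norm A B, dist_eq_norm C B]
    refine (norm_add_le _ _).trans_eq ?_
    rw [norm_smul, norm_smul, Real.norm_of_nonneg h0.le, Real.norm_of_nonneg h2.le]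
  have pC : dist P C ≤ x * dist C A + y * dist B C := by
    have hd : P - C = x • (A - C) + y • (B - C) := by
      rw [← hl, hx]; module
    rw [dist_eq_norm P C, hd, dist_comm C A, dist_eq_norm A C, dist_eq_norm B C]
    refine (norm_add_le _ _).trans_eq ?_
    rw [norm_smul, norm_smul, Real.norm_of_nonneg h0.le, Real.norm_of_nonneg h1.le]
  generalize hM : max (dist B C + dist C A) (max (dist C A + dist A B) (dist A B + dist B C)) = M
  have m1 : dist B C + dist C A ≤ M := hM ▸ le_max_left _ _
  have m2 : dist C A + dist A B ≤ M := hM ▸ (le_max_left _ _).trans (le_max_right _ _)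
  have m3 : dist A B + dist B C ≤ M := hM ▸ (le_max_right _ _).trans (le_max_right _ _)
  have k1 := mul_le_mul_of_nonneg_left m1 h2.le
  have k2 := mul_le_mul_of_nonneg_left m2 h0.le
  have k3 := mul_le_mul_of_nonneg_left m3 h1.le
  have k4 : x * M + y * M + z * M = M := by rw [← add_mul, ← add_mul, hs, one_mul]
  linarith
end

section
/- Let A, B, C be three points in the Euclidean plane. Every point F that minimizes P ↦ dist(P,A) + dist(P,B) + dist(P,C) lies in the convex hull of the set {A, B, C}. -/
open EuclideanGeometry

/-- Every Fermat–Torricelli point of `A`, `B`, `C` lies in the convex hull of the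
three points. -/
theorem fermat_point_mem_convexHull
    (A B C F : EuclideanSpace ℝ (Fin 2))
    (hF : ∀ P : EuclideanSpace ℝ (Fin 2),
      dist F A + dist F B + dist F C ≤ dist P A + dist P B + dist P C) :
    F ∈ convexHull ℝ ({A, B, C} : Set (EuclideanSpace ℝ (Fin 2))) := by
  by_contra hn
  set K := convexHull ℝ ({A, B, C} : Set (EuclideanSpace ℝ (Fin 2))) with hK
  have hfin : ({A, B, C} : Set (EuclideanSpace ℝ (Fin 2))).Finite := by simp
  have hsub : ({A, B, C} : Set (EuclideanSpace ℝ (Fin 2))) ⊆ K := subset_convexHull ℝ _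
  have hA : A ∈ K := hsub (by simp)
  have hB : B ∈ K := hsub (by simp)
  have hC : C ∈ K := hsub (by simp)
  have hconv : Convex ℝ K := convex_convexHull ℝ _
  have hcomp : IsComplete K := (hfin.isCompact_convexHull (𝕜 := ℝ)).isComplete
  obtain ⟨P, hP, hPe⟩ := exists_norm_eq_iInf_of_complete_convex ⟨A, hA⟩ hcomp hconv F
  have hin := (norm_eq_iInf_iff_real_inner_le_zero hconv hP).1 hPe
  have hne : 0 < ‖F - P‖ := by
    rw [norm_pos_iff, sub_ne_zero]
    rintro rfl
    exact hn hP
  have key : ∀ X ∈ K, dist P X < dist F X := by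
    intro X hX
    have h1 := hin X hX
    have h2 := norm_sub_sq_real (F - P) (X - P)
    rw [sub_sub_sub_cancel_right] at h2
    rw [dist_comm P X, dist_eq_norm, dist_eq_norm]
    apply lt_of_pow_lt_pow_left₀ 2 (norm_nonneg _)
    have := pow_pos hne 2
    linarith
  linarith [hF P, key A hA, key B hB, key C hC]
end

section
/- Let A, B, C be three affinely independent points in the Euclidean plane such that all three angles of the triangle, ∠BAC, ∠ABC and ∠BCA, are strictly less than 2π/3 (120°). Then any point F minimizing P ↦ dist(P,A) + dist(P,B) + dist(P,C) is distinct from each of the vertices: F ≠ A, F ≠ B and F ≠ C. -/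
open EuclideanGeometry Real

lemma fermat_aux_bound {V : Type*} [NormedAddCommGroup V] [InnerProductSpace ℝ V]
    (e s : V) (a t N : ℝ) (he : ‖e‖ = 1) (ha : 0 < a) (hs : ‖s‖ = N)
    (hes : inner ℝ s e = N ^ 2 / 2) :
    ‖t • s - a • e‖ ≤ a - t * N ^ 2 / 2 + t ^ 2 * N ^ 2 * (1 / (2 * a)) := by
  have h1 : ‖t • s - a • e‖ ^ 2 = t ^ 2 * N ^ 2 - t * a * N ^ 2 + a ^ 2 := by
    rw [norm_sub_sq_real, norm_smul, norm_smul, inner_smul_left, inner_smul_right, hes, he, hs,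
      mul_pow, mul_pow, Real.norm_eq_abs, Real.norm_eq_abs, sq_abs, sq_abs]
    simp
    ring
  have h2 : a - t * N ^ 2 / 2 + t ^ 2 * N ^ 2 * (1 / (2 * a))
      = (‖t • s - a • e‖ ^ 2 + a ^ 2) / (2 * a) := by
    rw [h1]; field_simp; ring
  rw [h2, le_div_iff₀ (by positivity)]
  nlinarith [sq_nonneg (‖t • s - a • e‖ - a)]

lemma fermat_aux_vec {V : Type*} [NormedAddCommGroup V] [InnerProductSpace ℝ V]
    (u v : V) (hu : u ≠ 0) (hv : v ≠ 0)
    (h : InnerProductGeometry.angle u v < 2 * π / 3) :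
    ∃ w : V, ‖w‖ + ‖w - u‖ + ‖w - v‖ < ‖u‖ + ‖v‖ := by
  have ha : 0 < ‖u‖ := norm_pos_iff.2 hu
  have hb : 0 < ‖v‖ := norm_pos_iff.2 hv
  have hcos : -(1 / 2 : ℝ) < Real.cos (InnerProductGeometry.angle u v) := by
    have h3 : Real.cos (2 * π / 3) = -(1 / 2) := by
      rw [show 2 * π / 3 = π - π / 3 by ring, Real.cos_pi_sub, Real.cos_pi_div_three]
    rw [← h3]
    exact Real.cos_lt_cos_of_nonneg_of_le_pi (InnerProductGeometry.angle_nonneg _ _)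
      (by linarith [Real.pi_pos]) h
  rw [InnerProductGeometry.cos_angle] at hcos
  obtain ⟨a, ha'⟩ : ∃ a, a = ‖u‖ := ⟨_, rfl⟩
  obtain ⟨b, hb'⟩ : ∃ b, b = ‖v‖ := ⟨_, rfl⟩
  rw [← ha', ← hb'] at hcos ⊢
  rw [← ha'] at ha
  rw [← hb'] at hb
  obtain ⟨e, he⟩ : ∃ e, e = a⁻¹ • u := ⟨_, rfl⟩
  obtain ⟨f, hf⟩ : ∃ f, f = b⁻¹ • v := ⟨_, rfl⟩
  have hue : u = a • e := by rw [he, smul_inv_smul₀ ha.ne']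
  have hvf : v = b • f := by rw [hf, smul_inv_smul₀ hb.ne']
  have hen : ‖e‖ = 1 := by
    rw [he, norm_smul, ← ha', norm_inv, Real.norm_of_nonneg ha.le, inv_mul_cancel₀ ha.ne']
  have hfn : ‖f‖ = 1 := by
    rw [hf, norm_smul, ← hb', norm_inv, Real.norm_of_nonneg hb.le, inv_mul_cancel₀ hb.ne']
  have hef : -(1 / 2 : ℝ) < inner ℝ e f := by
    have : inner ℝ e f = inner ℝ u v / (a * b) := by
      rw [he, hf, inner_smul_left, inner_smul_right]
      simp
      field_simp
    rwa [this]
  obtain ⟨N, hN⟩ : ∃ N, ‖e + f‖ = N := ⟨_, rfl⟩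
  have hN2 : N ^ 2 = 2 + 2 * inner ℝ e f := by
    rw [← hN, norm_add_sq_real, hen, hfn]; ring
  have hN0 : 0 ≤ N := hN ▸ norm_nonneg _
  have hN1 : 1 < N := by nlinarith
  have hse : inner ℝ (e + f) e = N ^ 2 / 2 := by
    rw [inner_add_left, real_inner_self_eq_norm_sq, hen, real_inner_comm, hN2]; ring
  have hsf : inner ℝ (e + f) f = N ^ 2 / 2 := by
    rw [inner_add_left, real_inner_self_eq_norm_sq, hfn, hN2]; ring
  obtain ⟨K, hK⟩ : ∃ K, K = 1 / (2 * a) + 1 / (2 * b) := ⟨_, rfl⟩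
  have hKpos : 0 < K := by rw [hK]; positivity
  obtain ⟨t, ht⟩ : ∃ t, t = (N - 1) / (2 * N * K) := ⟨_, rfl⟩
  have hNp : 0 < N := by linarith
  have htpos : 0 < t := by rw [ht]; exact div_pos (by linarith) (by positivity)
  have htK : t * N * K = (N - 1) / 2 := by rw [ht]; field_simp
  refine ⟨t • (e + f), ?_⟩
  have b1 := fermat_aux_bound e (e + f) a t N hen ha hN hse
  have b2 := fermat_aux_bound f (e + f) b t N hfn hb hN hsf
  have b3 : ‖t • (e + f)‖ = t * N := by rw [norm_smul, hN, Real.norm_of_nonneg htpos.le]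
  rw [hue, hvf, b3]
  have h5 : t ^ 2 * N ^ 2 * (1 / (2 * a)) + t ^ 2 * N ^ 2 * (1 / (2 * b))
      = t * N * ((N - 1) / 2) := by
    rw [← htK, hK]; ring
  have h6 : 0 < t * N * (N - 1) := mul_pos (mul_pos htpos hNp) (by linarith)
  nlinarith

lemma fermat_aux_pt (A B C : EuclideanSpace ℝ (Fin 2)) (hB : B ≠ A) (hC : C ≠ A)
    (h : ∠ B A C < 2 * π / 3) :
    ∃ P : EuclideanSpace ℝ (Fin 2), dist P A + dist P B + dist P C < dist A B + dist A C := by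
  obtain ⟨w, hw⟩ := fermat_aux_vec (B - A) (C - A) (sub_ne_zero.2 hB) (sub_ne_zero.2 hC) h
  refine ⟨w + A, ?_⟩
  rw [dist_comm A B, dist_comm A C]
  simp only [dist_eq_norm]
  rw [show w + A - A = w by abel, show w + A - B = w - (B - A) by abel,
    show w + A - C = w - (C - A) by abel]
  exact hw

/-- If all angles of the triangle `ABC` are strictly less than `120°`, then any point
minimizing the sum of distances to `A`, `B`, `C` is distinct from each vertex. -/
theorem fermat_point_ne_vertices
    (A B C : EuclideanSpace ℝ (Fin 2))
    (hABC : AffineIndependent ℝ ![A, B, C])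
    (hA : ∠ B A C < 2 * π / 3) (hB : ∠ A B C < 2 * π / 3) (hC : ∠ B C A < 2 * π / 3)
    (F : EuclideanSpace ℝ (Fin 2))
    (hF : ∀ P : EuclideanSpace ℝ (Fin 2),
      dist F A + dist F B + dist F C ≤ dist P A + dist P B + dist P C) :
    F ≠ A ∧ F ≠ B ∧ F ≠ C := by
  have hinj := hABC.injective
  have hAB : A ≠ B := fun h => absurd (@hinj 0 1 (by simpa using h)) (by decide)
  have hAC : A ≠ C := fun h => absurd (@hinj 0 2 (by simpa using h)) (by decide)
  have hBC : B ≠ C := fun h => absurd (@hinj 1 2 (by simpa using h)) (by decide)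
  refine ⟨?_, ?_, ?_⟩
  · rintro rfl
    obtain ⟨P, hP⟩ := fermat_aux_pt F B C hAB.symm hAC.symm hA
    have := hF P
    rw [dist_self] at this
    linarith
  · rintro rfl
    obtain ⟨P, hP⟩ := fermat_aux_pt F A C hAB hBC.symm hB
    have := hF P
    rw [dist_self] at this
    linarith
  · rintro rfl
    obtain ⟨P, hP⟩ := fermat_aux_pt F B A hBC hAC hC
    have := hF P
    rw [dist_self] at this
    linarith
end

section
/- (Simpson's construction.) Let A, B, C be three affinely independent points in the Euclidean plane with all angles of triangle ABC strictly less than 2π/3, and let F be the point minimizing P ↦ dist(P,A) + dist(P,B) + dist(P,C). Let A₁ be a point with dist(A₁,B) = dist(A₁,C) = dist(B,C) that lies strictly on the opposite side of the line through B and C from A (the apex of the equilateral triangle erected externally on side BC). Then F lies on the line through A and A₁. (By symmetry, F also lies on the analogous lines BB₁ and CC₁, so the three Simpson lines are concurrent at F.) -/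
open EuclideanGeometry Real

lemma ang_aux (X Y Z : EuclideanSpace ℝ (Fin 2)) (h : ∠ X Y Z < 2 * π / 3)
    (hneg : inner ℝ (X - Y) (Z - Y) < 0) :
    4 * (inner ℝ (X - Y) (Z - Y)) ^ 2 ≤
      inner ℝ (X - Y) (X - Y) * inner ℝ (Z - Y) (Z - Y) := by
  have h1 : Real.cos (2 * π / 3) ≤ Real.cos (∠ X Y Z) :=
    Real.cos_le_cos_of_nonneg_of_le_pi (EuclideanGeometry.angle_nonneg _ _ _)
      (by linarith [Real.pi_pos]) h.le
  have h2 : Real.cos (2 * π / 3) = -(1/2) := by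
    rw [show 2 * π / 3 = π - π / 3 by ring, Real.cos_pi_sub, Real.cos_pi_div_three]
  have h3 := InnerProductGeometry.cos_angle_mul_norm_mul_norm (X - Y) (Z - Y)
  have h4 : InnerProductGeometry.angle (X - Y) (Z - Y) = ∠ X Y Z := rfl
  rw [h4] at h3
  rw [h2] at h1
  have h5 : 0 ≤ ‖X - Y‖ * ‖Z - Y‖ := by positivity
  rw [real_inner_self_eq_norm_sq, real_inner_self_eq_norm_sq]
  generalize inner ℝ (X - Y) (Z - Y) = i at *
  have h6 : -2 * i ≤ ‖X - Y‖ * ‖Z - Y‖ := by nlinarith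
  nlinarith

/-- Simpson's construction: if all angles of the triangle `ABC` are less than `120°`,
`F` is the Fermat–Torricelli point, and `A₁` is the apex of the equilateral triangle
erected externally on the side `BC`, then `F` lies on the Simpson line `AA₁`. -/
theorem fermat_point_mem_simpson_line
    (A B C F A₁ : EuclideanSpace ℝ (Fin 2))
    (hABC : AffineIndependent ℝ ![A, B, C])
    (hA : ∠ B A C < 2 * π / 3) (hB : ∠ A B C < 2 * π / 3) (hC : ∠ B C A < 2 * π / 3)
    (hF : ∀ P : EuclideanSpace ℝ (Fin 2),
      dist F A + dist F B + dist F C ≤ dist P A + dist P B + dist P C)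
    (hA₁B : dist A₁ B = dist B C) (hA₁C : dist A₁ C = dist B C)
    (hside : (affineSpan ℝ ({B, C} : Set (EuclideanSpace ℝ (Fin 2)))).SOppSide A₁ A) :
    F ∈ affineSpan ℝ ({A, A₁} : Set (EuclideanSpace ℝ (Fin 2))) := by
  obtain ⟨p, hp, hs⟩ := hside.exists_sbtw
  obtain ⟨⟨r, ⟨hr0, hr1⟩, hrp⟩, hpA₁, hpA⟩ := hs
  obtain ⟨u, hu⟩ := mem_affineSpan_pair_iff_exists_lineMap_eq.1 hp
  simp only [AffineMap.lineMap_apply, vsub_eq_sub, vadd_eq_add] at hrp hu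
  have hr0' : 0 < r := lt_of_le_of_ne hr0 (by
    rintro rfl; apply hpA₁; rw [← hrp]; simp)
  have hr1' : r < 1 := lt_of_le_of_ne hr1 (by
    rintro rfl; apply hpA; rw [← hrp]; simp)
  have hs0 : 0 < dist B C := by
    rw [dist_pos]
    rintro rfl
    apply hside.left_notMem
    rw [dist_self, dist_eq_zero] at hA₁B
    rw [hA₁B]
    exact left_mem_affineSpan_pair ℝ _ _
  obtain ⟨b, hb⟩ : ∃ b, b = B - A₁ := ⟨_, rfl⟩
  obtain ⟨c, hc⟩ : ∃ c, c = C - A₁ := ⟨_, rfl⟩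
  obtain ⟨s, hs⟩ : ∃ s, s = dist B C := ⟨_, rfl⟩
  obtain rfl : B = A₁ + b := by rw [hb]; abel
  obtain rfl : C = A₁ + c := by rw [hc]; abel
  rw [← hs] at hA₁B hA₁C hs0
  have hbb : inner ℝ b b = s ^ 2 := by
    rw [real_inner_self_eq_norm_sq, ← hA₁B]; simp
  have hcc : inner ℝ c c = s ^ 2 := by
    rw [real_inner_self_eq_norm_sq, ← hA₁C]; simp
  have hbc : inner ℝ b c = s ^ 2 / 2 := by
    have : ‖b - c‖ = s := by rw [hs, dist_eq_norm]; simp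
    have h := norm_sub_sq_real b c
    rw [this, ← real_inner_self_eq_norm_sq, ← real_inner_self_eq_norm_sq, hbb, hcc] at h
    linarith
  have hcb : inner ℝ c b = s ^ 2 / 2 := by rw [real_inner_comm]; exact hbc
  obtain ⟨x, y, hxy, hAe⟩ : ∃ x y : ℝ, 1 < x + y ∧ A = A₁ + (x • b + y • c) := by
    refine ⟨(1 - u) / r, u / r, ?_, ?_⟩
    · rw [← add_div, lt_div_iff₀ hr0']; linarith
    · have h : r • (A - A₁) = (1 - u) • b + u • c := by
        have h1 : r • (A - A₁) = p - A₁ := by rw [← hrp]; abel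
        rw [h1, ← hu]; module
      have h2 : A - A₁ = r⁻¹ • ((1 - u) • b + u • c) := by
        rw [← h, smul_smul, inv_mul_cancel₀ hr0'.ne', one_smul]
      rw [← sub_eq_iff_eq_add', h2]; module
  subst hAe
  have key : ∀ i j k l : ℝ, inner ℝ (i • b + j • c) (k • b + l • c)
      = s ^ 2 * (i * k + j * l + (i * l + j * k) / 2) := by
    intro i j k l
    simp only [inner_add_left, inner_add_right, real_inner_smul_left, real_inner_smul_right,
      hbb, hcc, hbc, hcb]
    ring
  have hS : 0 < s ^ 2 := by positivity
  have hS2 : 0 < s ^ 2 * s ^ 2 := by positivity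
  have e1 : A₁ + b - (A₁ + (x • b + y • c)) = (1 - x) • b + (-y) • c := by module
  have e2 : A₁ + c - (A₁ + (x • b + y • c)) = (-x) • b + (1 - y) • c := by module
  have e3 : A₁ + (x • b + y • c) - (A₁ + b) = (x - 1) • b + y • c := by module
  have e4 : A₁ + c - (A₁ + b) = (-1 : ℝ) • b + (1 : ℝ) • c := by module
  have e5 : A₁ + b - (A₁ + c) = (1 : ℝ) • b + (-1 : ℝ) • c := by module
  have e6 : A₁ + (x • b + y • c) - (A₁ + c) = x • b + (y - 1) • c := by module
  have kA := ang_aux _ _ _ hA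
  have kB := ang_aux _ _ _ hB
  have kC := ang_aux _ _ _ hC
  rw [e1, e2, key, key, key] at kA
  rw [e3, e4, key, key, key] at kB
  rw [e5, e6, key, key, key] at kC
  have red : ∀ i j k : ℝ, (s ^ 2 * i < 0 → 4 * (s ^ 2 * i) ^ 2 ≤ s ^ 2 * j * (s ^ 2 * k)) →
      i < 0 → 4 * i ^ 2 ≤ j * k := by
    intro i j k h hi
    have h1 := h (mul_neg_of_pos_of_neg hS hi)
    refine le_of_mul_le_mul_left ?_ hS2
    linarith
  replace kA := red _ _ _ kA
  replace kB := red _ _ _ kB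
  replace kC := red _ _ _ kC
  have hy : 0 ≤ y := by
    by_contra! hy
    have h := kB (by linarith)
    nlinarith [mul_pos (neg_pos.2 hy) (show 0 < x - 1 by linarith)]
  have hx : 0 ≤ x := by
    by_contra! hx
    have h := kC (by linarith)
    nlinarith [mul_pos (neg_pos.2 hx) (show 0 < y - 1 by linarith)]
  obtain ⟨q, hq⟩ : ∃ q, q = x ^ 2 + x * y + y ^ 2 := ⟨_, rfl⟩
  have hqm : x + y ≤ q := by
    by_contra! hlt
    have h := kA (by nlinarith)
    have := mul_pos (sub_pos.2 hlt) (show 0 < 2 * (x + y) - 1 - q by linarith)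
    subst hq
    nlinarith
  have hq0 : 0 < q := by linarith
  obtain ⟨w, hw⟩ : ∃ w, w = √q := ⟨_, rfl⟩
  have hw0 : 0 < w := by rw [hw]; exact Real.sqrt_pos.2 hq0
  have hwq : w ^ 2 = q := by rw [hw]; exact Real.sq_sqrt hq0.le
  have nrm : ∀ i j d : ℝ, 0 ≤ d → i ^ 2 + i * j + j ^ 2 = d ^ 2 →
      ‖i • b + j • c‖ = s * d := by
    intro i j d hd h
    rw [← sq_eq_sq₀ (norm_nonneg _) (by positivity), ← real_inner_self_eq_norm_sq, key,
      mul_pow, ← h]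
    ring
  have hAA : dist (A₁ + (x • b + y • c)) A₁ = s * w := by
    rw [dist_eq_norm, add_sub_cancel_left]
    exact nrm _ _ _ hw0.le (by rw [hwq, hq])
  obtain ⟨t, ht⟩ : ∃ t, t = (x + y) / q := ⟨_, rfl⟩
  have ht1 : t ≤ 1 := by rw [ht, div_le_one hq0]; exact hqm
  have htq : t * q = x + y := by rw [ht]; field_simp
  have hP := hF (A₁ + ((t * x) • b + (t * y) • c))
  have d1 : dist (A₁ + ((t * x) • b + (t * y) • c)) (A₁ + (x • b + y • c))
      = s * ((1 - t) * w) := by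
    rw [dist_eq_norm, show A₁ + ((t * x) • b + (t * y) • c) - (A₁ + (x • b + y • c))
      = ((t - 1) * x) • b + ((t - 1) * y) • c by module]
    refine nrm _ _ _ (mul_nonneg (by linarith) hw0.le) ?_
    rw [mul_pow (1 - t) w, hwq, hq]; ring
  have d2 : dist (A₁ + ((t * x) • b + (t * y) • c)) (A₁ + b) = s * (y / w) := by
    rw [dist_eq_norm, show A₁ + ((t * x) • b + (t * y) • c) - (A₁ + b)
      = (t * x - 1) • b + (t * y) • c by module]
    refine nrm _ _ _ (by positivity) ?_
    rw [div_pow, hwq, ht]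
    field_simp
    rw [hq]; ring
  have d3 : dist (A₁ + ((t * x) • b + (t * y) • c)) (A₁ + c) = s * (x / w) := by
    rw [dist_eq_norm, show A₁ + ((t * x) • b + (t * y) • c) - (A₁ + c)
      = (t * x) • b + (t * y - 1) • c by module]
    refine nrm _ _ _ (by positivity) ?_
    rw [div_pow, hwq, ht]
    field_simp
    rw [hq]; ring
  have hsum : s * ((1 - t) * w) + s * (y / w) + s * (x / w) = s * w := by
    have : (x + y) / w = t * w := by
      rw [div_eq_iff hw0.ne', ← htq, ← hwq]; ring
    have h2 : s * (y / w) + s * (x / w) = s * ((x + y) / w) := by ring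
    rw [add_assoc, h2, this]; ring
  rw [d1, d2, d3, hsum, ← hAA] at hP
  have hpt := EuclideanGeometry.mul_dist_le_mul_dist_add_mul_dist F (A₁ + b) A₁ (A₁ + c)
  rw [← hs, hA₁C, dist_comm (A₁ + b) A₁, hA₁B] at hpt
  have hpt' : dist F A₁ ≤ dist F (A₁ + b) + dist F (A₁ + c) := by
    refine le_of_mul_le_mul_right ?_ hs0
    linarith
  have hfin : dist (A₁ + (x • b + y • c)) F + dist F A₁ = dist (A₁ + (x • b + y • c)) A₁ := by
    refine le_antisymm ?_ (dist_triangle _ _ _)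
    rw [dist_comm _ F]; linarith
  exact (dist_add_dist_eq_iff.1 hfin).mem_affineSpan
end

section
/- (Torricelli's construction.) Let A, B, C be three affinely independent points in the Euclidean plane, and let A₁, B₁, C₁ be the apexes of the equilateral triangles erected externally on the sides BC, CA, AB respectively, i.e. dist(A₁,B) = dist(A₁,C) = dist(B,C) with A₁ strictly on the opposite side of line BC from A, and analogously for B₁ and C₁. Then the three circumcircles of the triangles A₁BC, B₁CA and C₁AB have a common point: there exists a point P lying on the circumsphere of each of these three triangles. -/
open EuclideanGeometry

lemma apex_aux (X Y Z W : EuclideanSpace ℝ (Fin 2)) (k : ℝ) (hk : k ^ 2 = 3)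
    (h1 : dist X Y = dist Y Z) (h2 : dist X Z = dist Y Z)
    (hs : (affineSpan ℝ ({Y, Z} : Set (EuclideanSpace ℝ (Fin 2)))).SOppSide X W)
    (hD : 0 < k * ((Z 0 - Y 0) * (W 1 - Y 1) - (Z 1 - Y 1) * (W 0 - Y 0))) :
    X 0 = (Y 0 + Z 0) / 2 + k / 2 * (Z 1 - Y 1) ∧
    X 1 = (Y 1 + Z 1) / 2 - k / 2 * (Z 0 - Y 0) := by
  obtain ⟨p, hp, t, ⟨ht0, ht1⟩, rfl⟩ := AffineSubspace.wOppSide_iff_exists_wbtw.1 hs.wOppSide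
  obtain ⟨m, hm⟩ := mem_affineSpan_pair_iff_exists_lineMap_eq.1 hp
  have e0 := congrArg (fun q : EuclideanSpace ℝ (Fin 2) => q 0) hm
  have e1 := congrArg (fun q : EuclideanSpace ℝ (Fin 2) => q 1) hm
  simp [AffineMap.lineMap_apply] at e0 e1
  rw [EuclideanSpace.dist_eq, EuclideanSpace.dist_eq, Real.sqrt_inj (by positivity) (by positivity)] at h1 h2
  simp only [Fin.sum_univ_two, Real.dist_eq, sq_abs] at h1 h2
  generalize X 0 = x0 at *
  generalize X 1 = x1 at *
  generalize Y 0 = y0 at *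
  generalize Y 1 = y1 at *
  generalize Z 0 = z0 at *
  generalize Z 1 = z1 at *
  generalize W 0 = w0 at *
  generalize W 1 = w1 at *
  set D := (z0 - y0) * (w1 - y1) - (z1 - y1) * (w0 - y0) with hDd
  set c := (z0 - y0) * (x1 - y1) - (z1 - y1) * (x0 - y0) with hcd
  set L := (z0 - y0) ^ 2 + (z1 - y1) ^ 2 with hL
  have hbt : (1 - t) * c + t * D = 0 := by
    rw [hcd, hDd]; linear_combination (z1 - y1) * e0 - (z0 - y0) * e1
  have hLpos : 0 < L := by
    by_contra hn
    have a0 : z0 - y0 = 0 := by nlinarith [sq_nonneg (z0 - y0), sq_nonneg (z1 - y1)]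
    have a1 : z1 - y1 = 0 := by nlinarith [sq_nonneg (z0 - y0), sq_nonneg (z1 - y1)]
    rw [hDd, a0, a1] at hD; simp at hD
  have hdot : (z0 - y0) * (x0 - y0) + (z1 - y1) * (x1 - y1) = L / 2 := by
    rw [hL]; linear_combination (h1 - h2) / 2
  have hc2 : c ^ 2 = 3 / 4 * L ^ 2 := by
    have : c ^ 2 + ((z0 - y0) * (x0 - y0) + (z1 - y1) * (x1 - y1)) ^ 2 = L * L := by
      rw [hcd, hL]; linear_combination ((z0 - y0) ^ 2 + (z1 - y1) ^ 2) * h1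
    rw [hdot] at this; linarith
  have hc : c = - (k / 2 * L) := by
    have h : (c - k / 2 * L) * (c + k / 2 * L) = 0 := by
      linear_combination hc2 - L ^ 2 / 4 * hk
    rcases mul_eq_zero.1 h with h | h
    · exfalso
      have hc' : c = k / 2 * L := by linarith
      have h3 : (1 - t) * (3 / 2 * L) + t * (k * D) = 0 := by
        rw [hc'] at hbt; linear_combination k * hbt - (1 - t) * L / 2 * hk
      rcases eq_or_lt_of_le ht0 with h0 | h0
      · rw [← h0] at h3; linarith
      · have := mul_pos h0 hD
        have := mul_nonneg (sub_nonneg.2 ht1) (by positivity : 0 ≤ 3 / 2 * L)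
        linarith
    · linarith
  constructor
  · apply mul_left_cancel₀ hLpos.ne'
    rw [hL] at hc hdot ⊢
    linear_combination (z0 - y0) * hdot - (z1 - y1) * hc
  · apply mul_left_cancel₀ hLpos.ne'
    rw [hL] at hc hdot ⊢
    linear_combination (z1 - y1) * hdot + (z0 - y0) * hc

lemma sph_aux (c P Q R S : EuclideanSpace ℝ (Fin 2))
    (h1 : (P 0 - c 0) ^ 2 + (P 1 - c 1) ^ 2 = (Q 0 - c 0) ^ 2 + (Q 1 - c 1) ^ 2)
    (h2 : (R 0 - c 0) ^ 2 + (R 1 - c 1) ^ 2 = (Q 0 - c 0) ^ 2 + (Q 1 - c 1) ^ 2)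
    (h3 : (S 0 - c 0) ^ 2 + (S 1 - c 1) ^ 2 = (Q 0 - c 0) ^ 2 + (Q 1 - c 1) ^ 2) :
    ∃ s : EuclideanGeometry.Sphere (EuclideanSpace ℝ (Fin 2)),
        P ∈ s ∧ Q ∈ s ∧ R ∈ s ∧ S ∈ s := by
  refine ⟨⟨c, dist Q c⟩, ?_, rfl, ?_, ?_⟩ <;>
  · rw [EuclideanGeometry.mem_sphere, EuclideanSpace.dist_eq, EuclideanSpace.dist_eq]
    simp only [Fin.sum_univ_two, Real.dist_eq, sq_abs]
    congr 1

/-- Coordinates: the circle data for a point `P` given as a reflection. -/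
lemma alg_aux (k a0 a1 b0 b1 c0 c1 : ℝ) (hk : k ^ 2 = 3)
    (hD : 0 < k * ((b0 - a0) * (c1 - a1) - (b1 - a1) * (c0 - a0))) :
    ∃ p0 p1 : ℝ,
      ((p0 - ((b0 + c0) / 2 + k / 6 * (c1 - b1))) ^ 2 + (p1 - ((b1 + c1) / 2 - k / 6 * (c0 - b0))) ^ 2
        = (b0 - ((b0 + c0) / 2 + k / 6 * (c1 - b1))) ^ 2 + (b1 - ((b1 + c1) / 2 - k / 6 * (c0 - b0))) ^ 2) ∧
      ((p0 - ((c0 + a0) / 2 + k / 6 * (a1 - c1))) ^ 2 + (p1 - ((c1 + a1) / 2 - k / 6 * (a0 - c0))) ^ 2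
        = (c0 - ((c0 + a0) / 2 + k / 6 * (a1 - c1))) ^ 2 + (c1 - ((c1 + a1) / 2 - k / 6 * (a0 - c0))) ^ 2) ∧
      ((p0 - ((a0 + b0) / 2 + k / 6 * (b1 - a1))) ^ 2 + (p1 - ((a1 + b1) / 2 - k / 6 * (b0 - a0))) ^ 2
        = (a0 - ((a0 + b0) / 2 + k / 6 * (b1 - a1))) ^ 2 + (a1 - ((a1 + b1) / 2 - k / 6 * (b0 - a0))) ^ 2) := by
  obtain ⟨u0, rfl⟩ : ∃ u, b0 = a0 + u := ⟨b0 - a0, by ring⟩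
  obtain ⟨u1, rfl⟩ : ∃ u, b1 = a1 + u := ⟨b1 - a1, by ring⟩
  obtain ⟨v0, rfl⟩ : ∃ u, c0 = a0 + u := ⟨c0 - a0, by ring⟩
  obtain ⟨v1, rfl⟩ : ∃ u, c1 = a1 + u := ⟨c1 - a1, by ring⟩
  simp only [add_sub_cancel_left] at hD
  have hk3 : k ^ 3 = 3 * k := by linear_combination k * hk
  -- centres relative to A
  obtain ⟨f0, hf0⟩ : ∃ f, f = u0 / 2 + k / 6 * u1 := ⟨_, rfl⟩
  obtain ⟨f1, hf1⟩ : ∃ f, f = u1 / 2 - k / 6 * u0 := ⟨_, rfl⟩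
  obtain ⟨e0, he0⟩ : ∃ f, f = v0 / 2 - k / 6 * v1 := ⟨_, rfl⟩
  obtain ⟨e1, he1⟩ : ∃ f, f = v1 / 2 + k / 6 * v0 := ⟨_, rfl⟩
  obtain ⟨N, hN⟩ : ∃ N, N = (f0 - e0) ^ 2 + (f1 - e1) ^ 2 := ⟨_, rfl⟩
  have hNpos : 0 < N := by
    have : N = ((u0 - v0) ^ 2 + (u1 - v1) ^ 2 + u0 ^ 2 + u1 ^ 2 + v0 ^ 2 + v1 ^ 2) / 6
        + k * (u0 * v1 - u1 * v0) / 3 := by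
      rw [hN, hf0, hf1, he0, he1]
      linear_combination ((u0 + v0) ^ 2 + (u1 + v1) ^ 2) / 36 * hk
    rw [this]; positivity
  obtain ⟨t, ht⟩ : ∃ t, t * N = 2 * (f1 * (f0 - e0) - f0 * (f1 - e1)) :=
    ⟨2 * (f1 * (f0 - e0) - f0 * (f1 - e1)) / N, by field_simp⟩
  refine ⟨a0 - t * (f1 - e1), a1 + t * (f0 - e0), ?_, ?_, ?_⟩
  · have hX : -(f1 - e1) * (f0 - ((u0 + v0) / 2 + k / 6 * (v1 - u1)))
        + (f0 - e0) * (f1 - ((u1 + v1) / 2 - k / 6 * (v0 - u0))) = - (k / 2) * N := by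
      rw [hN]; subst hf0 hf1 he0 he1; ring_nf; simp only [hk, hk3]; ring
    have hY : -2 * k * (f1 * (f0 - e0) - f0 * (f1 - e1)) + 2 * (u0 * ((u0 + v0) / 2 + k / 6 * (v1 - u1))
        + u1 * ((u1 + v1) / 2 - k / 6 * (v0 - u0))) - u0 ^ 2 - u1 ^ 2 = 0 := by
      subst hf0 hf1 he0 he1; ring_nf; simp only [hk, hk3]; ring
    have hN' : t * N = t * ((f0 - e0) ^ 2 + (f1 - e1) ^ 2) := by rw [hN]
    linear_combination t * ht - t * hN' + 2 * t * hX - k * ht + hY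
  · subst hf0 hf1 he0 he1; rw [hN] at ht
    linear_combination t * ht
  · subst hf0 hf1 he0 he1; rw [hN] at ht
    linear_combination t * ht

/-- Torricelli's construction: the circumcircles of the three equilateral triangles
erected externally on the sides of a triangle `ABC` have a common point.  Here a
point lies on the circumcircle of a triple of points iff some sphere passes through
the triple and the point (for affinely independent triples such a sphere is unique:
the circumcircle). -/
theorem torricelli_circumcircles_concurrent
    (A B C A₁ B₁ C₁ : EuclideanSpace ℝ (Fin 2))
    (hABC : AffineIndependent ℝ ![A, B, C])
    (hA₁B : dist A₁ B = dist B C) (hA₁C : dist A₁ C = dist B C)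
    (hA₁side : (affineSpan ℝ ({B, C} : Set (EuclideanSpace ℝ (Fin 2)))).SOppSide A₁ A)
    (hB₁C : dist B₁ C = dist C A) (hB₁A : dist B₁ A = dist C A)
    (hB₁side : (affineSpan ℝ ({C, A} : Set (EuclideanSpace ℝ (Fin 2)))).SOppSide B₁ B)
    (hC₁A : dist C₁ A = dist A B) (hC₁B : dist C₁ B = dist A B)
    (hC₁side : (affineSpan ℝ ({A, B} : Set (EuclideanSpace ℝ (Fin 2)))).SOppSide C₁ C) :
    ∃ P : EuclideanSpace ℝ (Fin 2),
      (∃ s : EuclideanGeometry.Sphere (EuclideanSpace ℝ (Fin 2)),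
        A₁ ∈ s ∧ B ∈ s ∧ C ∈ s ∧ P ∈ s) ∧
      (∃ s : EuclideanGeometry.Sphere (EuclideanSpace ℝ (Fin 2)),
        B₁ ∈ s ∧ C ∈ s ∧ A ∈ s ∧ P ∈ s) ∧
      (∃ s : EuclideanGeometry.Sphere (EuclideanSpace ℝ (Fin 2)),
        C₁ ∈ s ∧ A ∈ s ∧ B ∈ s ∧ P ∈ s) := by
  have hD : (B 0 - A 0) * (C 1 - A 1) - (B 1 - A 1) * (C 0 - A 0) ≠ 0 := by
    intro h
    have hBC : A ≠ B := by
      intro e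
      have := hABC.injective.ne (show (0 : Fin 3) ≠ 1 by decide)
      exact this e
    apply hC₁side.right_notMem
    rw [mem_affineSpan_pair_iff_exists_lineMap_eq]
    have hL : 0 < (B 0 - A 0) ^ 2 + (B 1 - A 1) ^ 2 := by
      by_contra hn
      have a0 : B 0 - A 0 = 0 := by nlinarith [sq_nonneg (B 0 - A 0), sq_nonneg (B 1 - A 1)]
      have a1 : B 1 - A 1 = 0 := by nlinarith [sq_nonneg (B 0 - A 0), sq_nonneg (B 1 - A 1)]
      apply hBC
      ext i
      fin_cases i
      · simp; linarith
      · simp; linarith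
    refine ⟨((C 0 - A 0) * (B 0 - A 0) + (C 1 - A 1) * (B 1 - A 1))
      / ((B 0 - A 0) ^ 2 + (B 1 - A 1) ^ 2), ?_⟩
    ext i
    fin_cases i
    · simp [AffineMap.lineMap_apply]
      field_simp
      linear_combination (B 1 - A 1) * h
    · simp [AffineMap.lineMap_apply]
      field_simp
      linear_combination (-(B 0 - A 0)) * h
  obtain ⟨k, hk, hkD⟩ : ∃ k : ℝ, k ^ 2 = 3 ∧
      0 < k * ((B 0 - A 0) * (C 1 - A 1) - (B 1 - A 1) * (C 0 - A 0)) := by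
    have h3 : (0 : ℝ) < √3 := by positivity
    rcases lt_or_gt_of_ne hD with h | h
    · exact ⟨-√3, by norm_num, mul_pos_of_neg_of_neg (by linarith) h⟩
    · exact ⟨√3, by norm_num, mul_pos h3 h⟩
  obtain ⟨hA0, hA1⟩ := apex_aux A₁ B C A k hk hA₁B hA₁C hA₁side (by linarith)
  obtain ⟨hB0, hB1⟩ := apex_aux B₁ C A B k hk hB₁C hB₁A hB₁side (by linarith)
  obtain ⟨hC0, hC1⟩ := apex_aux C₁ A B C k hk hC₁A hC₁B hC₁side hkD
  obtain ⟨p0, p1, q1, q2, q3⟩ := alg_aux k (A 0) (A 1) (B 0) (B 1) (C 0) (C 1) hk hkD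
  refine ⟨!₂[p0, p1], ?_, ?_, ?_⟩
  · refine sph_aux !₂[(B 0 + C 0) / 2 + k / 6 * (C 1 - B 1), (B 1 + C 1) / 2 - k / 6 * (C 0 - B 0)]
      _ _ _ _ ?_ ?_ ?_
    · simp [hA0, hA1]
      linear_combination ((C 0 - B 0) ^ 2 + (C 1 - B 1) ^ 2) / 12 * hk
    · simp; ring
    · simpa using q1
  · refine sph_aux !₂[(C 0 + A 0) / 2 + k / 6 * (A 1 - C 1), (C 1 + A 1) / 2 - k / 6 * (A 0 - C 0)]
      _ _ _ _ ?_ ?_ ?_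
    · simp [hB0, hB1]
      linear_combination ((A 0 - C 0) ^ 2 + (A 1 - C 1) ^ 2) / 12 * hk
    · simp; ring
    · simpa using q2
  · refine sph_aux !₂[(A 0 + B 0) / 2 + k / 6 * (B 1 - A 1), (A 1 + B 1) / 2 - k / 6 * (B 0 - A 0)]
      _ _ _ _ ?_ ?_ ?_
    · simp [hC0, hC1]
      linear_combination ((B 0 - A 0) ^ 2 + (B 1 - A 1) ^ 2) / 12 * hk
    · simp; ring
    · simpa using q3
end
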